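/- The Gaussian isoperimetric profile satisfies I(a) ~ a·√(2·log(1/a)) as a → 0⁺; that is, lim_{a→0⁺} I(a) / (a·√(2·log(1/a))) = 1. -/

import Mathlib

open Real MeasureTheory Filter

/-- The standard Gaussian density. -/
noncomputable def gaussPdf (z : ℝ) : ℝ := (Real.sqrt (2 * Real.pi))⁻¹ * Real.exp (-z ^ 2 / 2)

/-- The standard normal CDF. -/
noncomputable def Phi (r : ℝ) : ℝ := ∫ z in Set.Iic r, gaussPdf z

/-- The inverse of the standard normal CDF. -/
noncomputable def PhiInv : ℝ → ℝ := Function.invFun Phi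

/-- The Gaussian isoperimetric profile `I = φ ∘ Φ⁻¹`. -/
noncomputable def gaussI (a : ℝ) : ℝ := gaussPdf (PhiInv a)

lemma pdf_pos (z : ℝ) : 0 < gaussPdf z := by unfold gaussPdf; positivity

lemma pdf_cont : Continuous gaussPdf := by unfold gaussPdf; fun_prop

lemma pdf_int : Integrable gaussPdf := by
  have h := (integrable_exp_neg_mul_sq (b := 1/2) (by norm_num)).const_mul
    (Real.sqrt (2 * Real.pi))⁻¹
  refine h.congr (Eventually.of_forall fun z => ?_)
  simp only [gaussPdf]
  congr 2
  ring

lemma pdf_deriv (x : ℝ) : HasDerivAt gaussPdf (-x * gaussPdf x) x := by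
  have h1 : HasDerivAt (fun z : ℝ => -z ^ 2 / 2) (-x) x := by
    have := ((hasDerivAt_pow 2 x).neg).div_const 2
    exact this.congr_deriv (by norm_num; ring)
  have h2 := (h1.exp).const_mul (Real.sqrt (2 * Real.pi))⁻¹
  exact h2.congr_deriv (by simp only [gaussPdf]; ring)

lemma Phi_eq (r : ℝ) : Phi r = Phi 0 + ∫ z in (0:ℝ)..r, gaussPdf z := by
  have := intervalIntegral.integral_Iic_sub_Iic (a := 0) (b := r) (f := gaussPdf) (μ := volume)
    pdf_int.integrableOn pdf_int.integrableOn
  unfold Phi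
  linarith

lemma Phi_deriv (x : ℝ) : HasDerivAt Phi (gaussPdf x) x := by
  have h := (pdf_cont.integral_hasStrictDerivAt 0 x).hasDerivAt.const_add (Phi 0)
  exact h.congr_of_eventuallyEq (Eventually.of_forall Phi_eq)

lemma Phi_mono : StrictMono Phi :=
  strictMono_of_hasDerivAt_pos Phi_deriv pdf_pos

lemma Phi_pos (x : ℝ) : 0 < Phi x := by
  have h : Phi (x - 1) < Phi x := Phi_mono (by linarith)
  have h0 : 0 ≤ Phi (x - 1) := integral_nonneg fun z => (pdf_pos z).le
  linarith

lemma Phi_bot : Tendsto Phi atBot (nhds 0) := by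
  have h := intervalIntegral_tendsto_integral_Iic (μ := volume) (f := gaussPdf) 0
    pdf_int.integrableOn tendsto_id
  have h2 := h.const_sub (Phi 0)
  have e : Phi 0 - ∫ z in Set.Iic (0:ℝ), gaussPdf z = 0 := by unfold Phi; ring
  rw [e] at h2
  refine h2.congr fun r => ?_
  rw [Phi_eq r, intervalIntegral.integral_symm]
  simp

lemma Phi_PhiInv {a : ℝ} (h0 : 0 < a) (h1 : a < Phi 0) : Phi (PhiInv a) = a := by
  apply Function.invFun_eq
  obtain ⟨b, hb, hb0⟩ := ((Phi_bot.eventually_lt_const h0).and (eventually_le_atBot 0)).exists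
  have hc : Continuous Phi := continuous_iff_continuousAt.2 fun x => (Phi_deriv x).continuousAt
  obtain ⟨x, -, hx⟩ := intermediate_value_Icc hb0 hc.continuousOn ⟨hb.le, h1.le⟩
  exact ⟨x, hx⟩

lemma PhiInv_tendsto : Tendsto PhiInv (nhdsWithin 0 (Set.Ioi 0)) atBot := by
  rw [tendsto_atBot]
  intro M
  have h1 : ∀ᶠ a in nhdsWithin (0:ℝ) (Set.Ioi 0), a < Phi 0 :=
    nhdsWithin_le_nhds (eventually_lt_nhds (Phi_pos 0))
  have h2 : ∀ᶠ a in nhdsWithin (0:ℝ) (Set.Ioi 0), a < Phi M :=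
    nhdsWithin_le_nhds (eventually_lt_nhds (Phi_pos M))
  filter_upwards [h1, h2, self_mem_nhdsWithin] with a ha hb hc
  rw [← Phi_mono.le_iff_le, Phi_PhiInv hc ha]
  exact hb.le

lemma pdf_le (x : ℝ) : gaussPdf x ≤ (Real.sqrt (2 * Real.pi))⁻¹ := by
  unfold gaussPdf
  have : Real.exp (-x ^ 2 / 2) ≤ 1 := Real.exp_le_one_iff.2 (by nlinarith [sq_nonneg x])
  have h : 0 ≤ (Real.sqrt (2 * Real.pi))⁻¹ := by positivity
  nlinarith

lemma inv_bot : Tendsto (fun x : ℝ => x⁻¹) atBot (nhds 0) := tendsto_inv_atBot_zero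

lemma mills : Tendsto (fun x => Phi x / (gaussPdf x * (-x⁻¹))) atBot (nhds 1) := by
  refine HasDerivAt.lhopital_zero_atBot_on_Iio (a := 0) (f' := gaussPdf)
    (g' := fun x => gaussPdf x * (1 + (x⁻¹)^2)) (fun x _ => Phi_deriv x) ?_ ?_ Phi_bot ?_ ?_
  · intro x hx
    have hx0 : x ≠ 0 := ne_of_lt hx
    refine ((pdf_deriv x).mul (hasDerivAt_inv hx0).neg).congr_deriv ?_
    simp only [Pi.neg_apply]
    field_simp
  · intro x _
    have := pdf_pos x
    positivity
  · refine bdd_le_mul_tendsto_zero' (Real.sqrt (2 * Real.pi))⁻¹ ?_ (by simpa using inv_bot.neg)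
    refine Eventually.of_forall fun x => ?_
    rw [abs_of_pos (pdf_pos x)]; exact pdf_le x
  · have h : Tendsto (fun x : ℝ => (1 + (x⁻¹)^2)⁻¹) atBot (nhds (1 + 0^2)⁻¹) :=
      ((inv_bot.pow 2).const_add 1).inv₀ (by norm_num)
    norm_num at h
    refine Tendsto.congr (fun x => ?_) h
    have := pdf_pos x
    field_simp

lemma log_lim : Tendsto (fun x => 2 * Real.log (1 / Phi x) / x ^ 2) atBot (nhds 1) := by
  have h1 : Tendsto (fun x => Real.log (Phi x / (gaussPdf x * (-x⁻¹)))) atBot (nhds 0) := by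
    simpa using mills.log one_ne_zero
  have i2 : Tendsto (fun x : ℝ => (x⁻¹)^2) atBot (nhds 0) := by simpa using inv_bot.pow 2
  have h3 : Tendsto (fun x : ℝ => Real.log (-x) * (x⁻¹)^2) atBot (nhds 0) := by
    have h := (isLittleO_log_rpow_atTop (r := 2) (by norm_num)).tendsto_div_nhds_zero.comp
      tendsto_neg_atBot_atTop
    refine h.congr fun x => ?_
    simp [div_eq_mul_inv]
  have h := (((h1.mul i2).const_mul (-2)).add ((i2.const_mul
    (2 * Real.log (Real.sqrt (2 * Real.pi)))).add (h3.const_mul 2))).const_add 1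
  simp only [mul_zero, add_zero] at h
  refine h.congr' ?_
  filter_upwards [eventually_lt_atBot 0] with x hx
  have hp := Phi_pos x
  have hq := pdf_pos x
  have hx' : 0 < -x := by linarith
  have hxi : (-x⁻¹) = (-x)⁻¹ := by rw [inv_neg]
  have e1 : Real.log (Phi x / (gaussPdf x * (-x⁻¹)))
      = Real.log (Phi x) - Real.log (gaussPdf x) + Real.log (-x) := by
    rw [hxi, Real.log_div hp.ne' (by positivity), Real.log_mul hq.ne' (by positivity), Real.log_inv]
    ring
  have e2 : Real.log (gaussPdf x) = -Real.log (Real.sqrt (2 * Real.pi)) - x ^ 2 / 2 := by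
    unfold gaussPdf
    rw [Real.log_mul (by positivity) (by positivity), Real.log_inv, Real.log_exp]
    ring
  rw [one_div, Real.log_inv, e1, e2]
  have hx0 : x ≠ 0 := hx.ne
  field_simp
  ring

lemma main_lim : Tendsto (fun x => gaussPdf x / (Phi x * Real.sqrt (2 * Real.log (1 / Phi x))))
    atBot (nhds 1) := by
  have h := (mills.mul log_lim.sqrt).inv₀ (by norm_num)
  norm_num at h
  refine h.congr' ?_
  filter_upwards [eventually_lt_atBot 0] with x hx
  have hp := Phi_pos x
  have hq := pdf_pos x
  rw [one_div, Real.log_inv, Real.sqrt_div' _ (sq_nonneg x), Real.sqrt_sq_eq_abs, abs_of_neg hx]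
  have : x ≠ 0 := hx.ne
  field_simp

/-- `I(a) ~ a·√(2·log(1/a))` as `a → 0⁺`. -/
theorem stmt2 :
    Tendsto (fun a : ℝ => gaussI a / (a * Real.sqrt (2 * Real.log (1 / a))))
      (nhdsWithin 0 (Set.Ioi 0)) (nhds 1) := by
  refine (main_lim.comp PhiInv_tendsto).congr' ?_
  have h1 : ∀ᶠ a in nhdsWithin (0:ℝ) (Set.Ioi 0), a < Phi 0 :=
    nhdsWithin_le_nhds (eventually_lt_nhds (Phi_pos 0))
  filter_upwards [h1, self_mem_nhdsWithin] with a ha hc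
  simp only [Function.comp, gaussI, Phi_PhiInv hc ha]
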